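/- The functions \{\sqrt{\epsilon_m(n+1)/\pi}\, R_n^m(r)\cos m\phi\} \cup \{\sqrt{2(n+1)/\pi}\, R_n^m(r)\sin m\phi : m \ge 1\} (over admissible pairs (n,m)) form an orthonormal family in L^2 of the unit disk with measure r\,dr\,d\phi; that is, any two distinct such functions have inner product \int_0^1\int_0^{2\pi} f g\, r\, d\phi\, dr = 0 and each has norm 1. -/

import Mathlib

open scoped Real BigOperators

/-- Radial part of the Zernike polynomial. -/
noncomputable def Rz (n m : ℕ) (r : ℝ) : ℝ :=
  ∑ ℓ ∈ Finset.range ((n - m) / 2 + 1),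
    (-1 : ℝ) ^ ℓ * (Nat.factorial (n - ℓ) : ℝ) /
      ((Nat.factorial ℓ : ℝ) * (Nat.factorial ((n - m) / 2 - ℓ) : ℝ) *
        (Nat.factorial ((n + m) / 2 - ℓ) : ℝ)) *
      r ^ (n - 2 * ℓ)

/-- Normalized Zernike disk function: `b = true` gives the cosine type,
`b = false` the sine type. -/
noncomputable def zern (n m : ℕ) (b : Bool) (r φ : ℝ) : ℝ :=
  Real.sqrt ((if m = 0 then (1:ℝ) else 2) * ((n : ℝ) + 1) / π) * Rz n m r *
    (if b then Real.cos ((m : ℝ) * φ) else Real.sin ((m : ℝ) * φ))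

/-!
In the variable `t = r ^ 2` the radial part is `r ^ m` times a Jacobi polynomial `J m k`, where
`n = m + 2 * k`, and Rodrigues' formula exhibits `t ^ m * J m k` as the `k`-th divided derivative
of `t ^ (m + k) * (t - 1) ^ k`. Integrating by parts `k` times against a polynomial `q` of degree
at most `k` leaves the coefficient of `t ^ k` in `q` times a beta integral, so that `J m k` is
orthogonal to every `J m l` with `l < k`, and `q = J m k` gives the norm.
-/

open Polynomial

theorem integral_cos_int_mul (k : ℤ) :
    ∫ φ in (0 : ℝ)..(2 * π), Real.cos (k * φ) = if k = 0 then 2 * π else 0 := by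
  split_ifs with hk
  · simp [hk]
  · have h_sin : Real.sin (k * (2 * π)) = 0 := by
      simpa [mul_assoc, mul_comm, mul_left_comm] using Real.sin_int_mul_pi (2 * k)
    rw [intervalIntegral.integral_comp_mul_left Real.cos (Int.cast_ne_zero.mpr hk), integral_cos,
      h_sin]
    simp

theorem integral_sin_int_mul (k : ℤ) : ∫ φ in (0 : ℝ)..(2 * π), Real.sin (k * φ) = 0 := by
  rcases eq_or_ne k 0 with rfl | hk
  · simp
  · rw [intervalIntegral.integral_comp_mul_left Real.sin (Int.cast_ne_zero.mpr hk), integral_sin,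
      Real.cos_int_mul_two_pi]
    simp

theorem integral_cos_nat_mul_mul_cos_nat_mul (m n : ℕ) :
    ∫ φ in (0 : ℝ)..(2 * π), Real.cos (m * φ) * Real.cos (n * φ) =
      if m = n then (if m = 0 then 2 * π else π) else 0 := by
  have product_to_sum (φ : ℝ) : Real.cos (m * φ) * Real.cos (n * φ) =
      (Real.cos ((m - n : ℤ) * φ) + Real.cos ((m + n : ℤ) * φ)) / 2 := by
    push_cast
    rw [sub_mul, add_mul, ← Real.two_mul_cos_mul_cos]
    ring
  simp_rw [product_to_sum]
  rw [intervalIntegral.integral_div, intervalIntegral.integral_add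
    (Continuous.intervalIntegrable (by fun_prop) _ _)
    (Continuous.intervalIntegrable (by fun_prop) _ _), integral_cos_int_mul, integral_cos_int_mul]
  split_ifs <;> first | omega | ring

theorem integral_sin_nat_mul_mul_sin_nat_mul (m n : ℕ) :
    ∫ φ in (0 : ℝ)..(2 * π), Real.sin (m * φ) * Real.sin (n * φ) =
      if m = n then (if m = 0 then 0 else π) else 0 := by
  have product_to_sum (φ : ℝ) : Real.sin (m * φ) * Real.sin (n * φ) =
      (Real.cos ((m - n : ℤ) * φ) - Real.cos ((m + n : ℤ) * φ)) / 2 := by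
    push_cast
    rw [sub_mul, add_mul, ← Real.two_mul_sin_mul_sin]
    ring
  simp_rw [product_to_sum]
  rw [intervalIntegral.integral_div, intervalIntegral.integral_sub
    (Continuous.intervalIntegrable (by fun_prop) _ _)
    (Continuous.intervalIntegrable (by fun_prop) _ _), integral_cos_int_mul, integral_cos_int_mul]
  split_ifs <;> first | omega | ring

theorem integral_sin_nat_mul_mul_cos_nat_mul (m n : ℕ) :
    ∫ φ in (0 : ℝ)..(2 * π), Real.sin (m * φ) * Real.cos (n * φ) = 0 := by
  have product_to_sum (φ : ℝ) : Real.sin (m * φ) * Real.cos (n * φ) =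
      (Real.sin ((m - n : ℤ) * φ) + Real.sin ((m + n : ℤ) * φ)) / 2 := by
    push_cast
    rw [sub_mul, add_mul, ← Real.two_mul_sin_mul_cos]
    ring
  simp_rw [product_to_sum]
  rw [intervalIntegral.integral_div, intervalIntegral.integral_add
    (Continuous.intervalIntegrable (by fun_prop) _ _)
    (Continuous.intervalIntegrable (by fun_prop) _ _), integral_sin_int_mul, integral_sin_int_mul]
  simp

theorem integral_comp_sq_mul_self {f : ℝ → ℝ} (hf : Continuous f) (a b : ℝ) :
    ∫ x in a..b, f (x ^ 2) * x = (∫ t in a ^ 2..b ^ 2, f t) / 2 := by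
  have h_subst := intervalIntegral.integral_comp_mul_deriv (a := a) (b := b)
    (fun x _ => by simpa using hasDerivAt_pow 2 x) (by fun_prop) hf
  rw [← h_subst, ← intervalIntegral.integral_div]
  refine intervalIntegral.integral_congr fun x _ => ?_
  simp only [Function.comp_apply]
  ring

theorem integral_pow_mul_one_sub_pow (m n : ℕ) :
    ∫ t in (0 : ℝ)..1, t ^ m * (1 - t) ^ n = m.factorial * n.factorial / (m + n + 1).factorial := by
  have h_beta := Complex.betaIntegral_eq_Gamma_mul_div (m + 1) (n + 1)
    (by norm_cast; exact m.succ_pos) (by norm_cast; exact n.succ_pos)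
  rw [show (m + 1 + (n + 1) : ℂ) = (m + n + 1 : ℕ) + 1 by push_cast; ring,
    Complex.Gamma_nat_eq_factorial, Complex.Gamma_nat_eq_factorial,
    Complex.Gamma_nat_eq_factorial, Complex.betaIntegral] at h_beta
  simp only [add_sub_cancel_right, Complex.cpow_natCast] at h_beta
  apply Complex.ofReal_injective
  rw [← intervalIntegral.integral_ofReal]
  push_cast
  exact h_beta

theorem integral_eval_derivative_mul_eval_of_isRoot {a b : ℝ} {p : ℝ[X]} (ha : p.IsRoot a)
    (hb : p.IsRoot b) (q : ℝ[X]) :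
    ∫ x in a..b, (derivative p).eval x * q.eval x =
      -∫ x in a..b, p.eval x * (derivative q).eval x := by
  simp_rw [mul_comm _ (q.eval _), mul_comm (p.eval _)]
  rw [intervalIntegral.integral_mul_deriv_eq_deriv_mul (fun x _ => q.hasDerivAt x)
    (fun x _ => p.hasDerivAt x) (Continuous.intervalIntegrable (by fun_prop) _ _)
    (Continuous.intervalIntegrable (by fun_prop) _ _), ha.eq_zero, hb.eq_zero]
  simp

theorem integral_eval_iterate_derivative_mul_eval_of_pow_dvd {a b : ℝ} {k : ℕ} {p : ℝ[X]}
    (ha : (X - C a) ^ k ∣ p) (hb : (X - C b) ^ k ∣ p) (q : ℝ[X]) :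
    ∫ x in a..b, (derivative^[k] p).eval x * q.eval x =
      (-1) ^ k * ∫ x in a..b, p.eval x * (derivative^[k] q).eval x := by
  induction k generalizing q with
  | zero => simp
  | succ k ih =>
    have isRoot {c : ℝ} (hc : (X - C c) ^ (k + 1) ∣ p) : (derivative^[k] p).IsRoot c :=
      dvd_iff_isRoot.mp (by simpa using pow_sub_dvd_iterate_derivative_of_pow_dvd k hc)
    have pow_dvd {c : ℝ} (hc : (X - C c) ^ (k + 1) ∣ p) : (X - C c) ^ k ∣ p :=
      (pow_dvd_pow _ k.le_succ).trans hc
    rw [Function.iterate_succ_apply',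
      integral_eval_derivative_mul_eval_of_isRoot (isRoot ha) (isRoot hb),
      ih (pow_dvd ha) (pow_dvd hb), Function.iterate_succ_apply, pow_succ]
    ring

theorem integral_eval_hasseDeriv_mul_eval_of_pow_dvd {a b : ℝ} {k : ℕ} {p : ℝ[X]}
    (ha : (X - C a) ^ k ∣ p) (hb : (X - C b) ^ k ∣ p) (q : ℝ[X]) :
    ∫ x in a..b, (hasseDeriv k p).eval x * q.eval x =
      (-1) ^ k * ∫ x in a..b, p.eval x * (hasseDeriv k q).eval x := by
  have h_factorial (f : ℝ[X]) (x : ℝ) :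
      (derivative^[k] f).eval x = k.factorial * (hasseDeriv k f).eval x := by
    rw [← factorial_smul_hasseDeriv, LinearMap.smul_apply, eval_smul, nsmul_eq_mul]
  have h_parts := integral_eval_iterate_derivative_mul_eval_of_pow_dvd ha hb q
  simp only [h_factorial, mul_assoc, mul_left_comm _ (k.factorial : ℝ),
    intervalIntegral.integral_const_mul] at h_parts
  exact mul_left_cancel₀ (Nat.cast_ne_zero.mpr k.factorial_ne_zero) h_parts

theorem hasseDeriv_eq_C_of_natDegree_le {R : Type*} [Semiring R] {k : ℕ} {q : R[X]}
    (hq : q.natDegree ≤ k) : hasseDeriv k q = C (q.coeff k) := by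
  rcases hq.lt_or_eq with hlt | rfl
  · rw [hasseDeriv_eq_zero_of_lt_natDegree q k hlt, coeff_eq_zero_of_natDegree_lt hlt, C_0]
  · exact hasseDeriv_natDegree_eq_C q

/-- The Jacobi polynomial with parameters `(0, m)` and degree `k`, transported from `[-1, 1]` to
`[0, 1]`: in the classical notation `P_k^(0,m)(2 * X - 1)`. Its value at
`r ^ 2` is the cofactor of `r ^ m` in the radial Zernike polynomial `R_n^m` with
`n = m + 2 * k`. -/
noncomputable def shiftedJacobi (R : Type*) [Ring R] (m k : ℕ) : R[X] :=
  ∑ i ∈ Finset.range (k + 1), monomial i ((-1) ^ (k - i) * k.choose i * (m + k + i).choose k)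

theorem natDegree_shiftedJacobi_le (R : Type*) [Ring R] (m k : ℕ) :
    (shiftedJacobi R m k).natDegree ≤ k :=
  natDegree_sum_le_of_forall_le _ _ fun _ hi =>
    (natDegree_monomial_le _).trans (Finset.mem_range_succ_iff.mp hi)

theorem coeff_shiftedJacobi_self (R : Type*) [Ring R] (m k : ℕ) :
    (shiftedJacobi R m k).coeff k = (m + 2 * k).choose k := by
  simp [shiftedJacobi, coeff_monomial, two_mul, add_assoc]

theorem X_pow_mul_shiftedJacobi_eq_hasseDeriv (R : Type*) [CommRing R] (m k : ℕ) :
    X ^ m * shiftedJacobi R m k = hasseDeriv k (X ^ (m + k) * (X - 1) ^ k) := by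
  have h_binomial : (X ^ (m + k) * (X - 1) ^ k : R[X]) =
      ∑ i ∈ Finset.range (k + 1), monomial (m + k + i) ((-1) ^ (k - i) * k.choose i : R) := by
    rw [sub_eq_add_neg, add_pow, Finset.mul_sum]
    refine Finset.sum_congr rfl fun i _ => ?_
    rw [← C_mul_X_pow_eq_monomial]
    push_cast [map_mul, map_pow, map_neg, map_one, map_natCast]
    ring
  rw [h_binomial, map_sum, shiftedJacobi, Finset.mul_sum]
  refine Finset.sum_congr rfl fun i _ => ?_
  rw [hasseDeriv_monomial, X_pow_eq_monomial, monomial_mul_monomial, one_mul,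
    show m + k + i - k = m + i by omega, mul_comm _ ((m + k + i).choose k : R)]

theorem integral_pow_mul_shiftedJacobi_mul (m : ℕ) {k : ℕ} {q : ℝ[X]} (hq : q.natDegree ≤ k) :
    ∫ t in (0 : ℝ)..1, t ^ m * (shiftedJacobi ℝ m k).eval t * q.eval t =
      q.coeff k * ((m + k).factorial * k.factorial / (m + 2 * k + 1).factorial) := by
  set p : ℝ[X] := X ^ (m + k) * (X - 1) ^ k
  have h_zero : (X - C 0) ^ k ∣ p := by
    simpa [p] using (pow_dvd_pow (X : ℝ[X]) (Nat.le_add_left k m)).mul_right _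
  have h_one : (X - C 1) ^ k ∣ p := by
    simp [p]
  calc ∫ t in (0 : ℝ)..1, t ^ m * (shiftedJacobi ℝ m k).eval t * q.eval t
      = ∫ t in (0 : ℝ)..1, (hasseDeriv k p).eval t * q.eval t := by
        simp [p, ← X_pow_mul_shiftedJacobi_eq_hasseDeriv]
    _ = (-1) ^ k * ∫ t in (0 : ℝ)..1, p.eval t * (hasseDeriv k q).eval t :=
        integral_eval_hasseDeriv_mul_eval_of_pow_dvd h_zero h_one q
    _ = q.coeff k * ∫ t in (0 : ℝ)..1, t ^ (m + k) * (1 - t) ^ k := by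
        simp_rw [hasseDeriv_eq_C_of_natDegree_le hq, ← intervalIntegral.integral_const_mul]
        refine intervalIntegral.integral_congr fun t _ => ?_
        have h_sign : (1 - t) ^ k = (-1) ^ k * (t - 1) ^ k := by rw [← mul_pow]; ring
        simp only [p, eval_mul, eval_pow, eval_X, eval_sub, eval_one, eval_C, h_sign]
        ring
    _ = q.coeff k * ((m + k).factorial * k.factorial / (m + 2 * k + 1).factorial) := by
        rw [integral_pow_mul_one_sub_pow, two_mul, add_assoc m k k]

theorem integral_pow_mul_shiftedJacobi_mul_shiftedJacobi (m k l : ℕ) :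
    ∫ t in (0 : ℝ)..1, t ^ m * (shiftedJacobi ℝ m k).eval t * (shiftedJacobi ℝ m l).eval t =
      if k = l then 1 / ((m : ℝ) + 2 * k + 1) else 0 := by
  wlog hlk : l ≤ k generalizing k l
  · have hkl : k ≠ l := by omega
    simpa only [mul_right_comm, if_neg hkl, if_neg hkl.symm] using this l k (by omega)
  have h_deg := natDegree_shiftedJacobi_le ℝ m l
  rw [integral_pow_mul_shiftedJacobi_mul m (h_deg.trans hlk)]
  split_ifs with hkl
  · subst hkl
    rw [coeff_shiftedJacobi_self, Nat.cast_choose ℝ (by omega : k ≤ m + 2 * k),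
      show m + 2 * k - k = m + k by omega, Nat.factorial_succ]
    push_cast
    field_simp
  · rw [coeff_eq_zero_of_natDegree_lt (by omega), zero_mul]

theorem Rz_eq_pow_mul_eval_shiftedJacobi (m k : ℕ) (r : ℝ) :
    Rz (m + 2 * k) m r = r ^ m * (shiftedJacobi ℝ m k).eval (r ^ 2) := by
  rw [Rz, show (m + 2 * k - m) / 2 = k by omega, show (m + 2 * k + m) / 2 = m + k by omega,
    shiftedJacobi, eval_finsetSum, Finset.mul_sum, ← Finset.sum_range_reflect]
  refine Finset.sum_congr rfl fun i hi => ?_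
  obtain ⟨l, rfl⟩ := Nat.exists_eq_add_of_le (Finset.mem_range_succ_iff.mp hi)
  rw [eval_monomial, Nat.cast_choose ℝ (Nat.le_add_right i l),
    Nat.cast_choose ℝ (show i + l ≤ m + (i + l) + i by omega),
    show i + l + 1 - 1 - i = l by omega, show i + l - l = i by omega,
    show i + l - i = l by omega, show m + (i + l) - l = m + i by omega,
    show m + (i + l) + i - (i + l) = m + i by omega,
    show m + 2 * (i + l) - l = m + (i + l) + i by omega,
    show m + 2 * (i + l) - 2 * l = m + 2 * i by omega]
  field_simp
  ring

theorem integral_Rz_mul_Rz {n n' m : ℕ} (hmn : m ≤ n) (heven : Even (n - m)) (hmn' : m ≤ n')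
    (heven' : Even (n' - m)) :
    ∫ r in (0 : ℝ)..1, Rz n m r * Rz n' m r * r =
      if n = n' then 1 / (2 * ((n : ℝ) + 1)) else 0 := by
  obtain ⟨k, hk⟩ := heven
  obtain ⟨l, hl⟩ := heven'
  obtain rfl : n = m + 2 * k := by omega
  obtain rfl : n' = m + 2 * l := by omega
  have h_subst := integral_comp_sq_mul_self (f := fun t =>
    t ^ m * (shiftedJacobi ℝ m k).eval t * (shiftedJacobi ℝ m l).eval t) (by fun_prop) 0 1
  calc ∫ r in (0 : ℝ)..1, Rz (m + 2 * k) m r * Rz (m + 2 * l) m r * r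
      = ∫ r in (0 : ℝ)..1, (r ^ 2) ^ m * (shiftedJacobi ℝ m k).eval (r ^ 2) *
          (shiftedJacobi ℝ m l).eval (r ^ 2) * r := by
        simp_rw [Rz_eq_pow_mul_eval_shiftedJacobi]
        refine intervalIntegral.integral_congr fun r _ => ?_
        ring
    _ = (if k = l then 1 / ((m : ℝ) + 2 * k + 1) else 0) / 2 := by
        rw [h_subst, zero_pow two_ne_zero, one_pow,
          integral_pow_mul_shiftedJacobi_mul_shiftedJacobi]
    _ = if m + 2 * k = m + 2 * l then 1 / (2 * (((m + 2 * k : ℕ) : ℝ) + 1)) else 0 := by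
        simp only [ite_div, zero_div, div_div, mul_comm _ (2 : ℝ), add_right_inj,
          mul_right_inj' two_ne_zero]
        push_cast
        rfl

/-- The angular factor of `zern`: `cos (m * φ)` for `b = true` and `sin (m * φ)` for
`b = false`. -/
noncomputable def zernAngular (m : ℕ) (b : Bool) (φ : ℝ) : ℝ :=
  if b then Real.cos (m * φ) else Real.sin (m * φ)

/-- The factor `√(ε_m * (n + 1) / π)` which gives `zern` norm one. -/
noncomputable def zernNormalization (n m : ℕ) : ℝ :=
  √((if m = 0 then (1 : ℝ) else 2) * ((n : ℝ) + 1) / π)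

theorem integral_zernAngular_mul_zernAngular {m : ℕ} {b : Bool} (hb : b = false → 1 ≤ m)
    (m' : ℕ) (b' : Bool) :
    ∫ φ in (0 : ℝ)..(2 * π), zernAngular m b φ * zernAngular m' b' φ =
      if m = m' ∧ b = b' then 2 * π / (if m = 0 then 1 else 2) else 0 := by
  have h_norm : 2 * π / (if m = 0 then 1 else 2) = if m = 0 then 2 * π else π := by
    split_ifs <;> simp
  rw [h_norm]
  cases b <;> cases b'
  · have hm : m ≠ 0 := Nat.one_le_iff_ne_zero.mp (hb rfl)
    simpa [zernAngular, hm] using integral_sin_nat_mul_mul_sin_nat_mul m m'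
  · simpa [zernAngular] using integral_sin_nat_mul_mul_cos_nat_mul m m'
  · simpa [zernAngular, mul_comm] using integral_sin_nat_mul_mul_cos_nat_mul m' m
  · simpa [zernAngular] using integral_cos_nat_mul_mul_cos_nat_mul m m'

theorem integral_zern_mul_zern (n m n' m' : ℕ) (b b' : Bool) :
    ∫ r in (0 : ℝ)..1, (∫ φ in (0 : ℝ)..(2 * π), zern n m b r φ * zern n' m' b' r φ) * r =
      zernNormalization n m * zernNormalization n' m' *
        (∫ φ in (0 : ℝ)..(2 * π), zernAngular m b φ * zernAngular m' b' φ) *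
          ∫ r in (0 : ℝ)..1, Rz n m r * Rz n' m' r * r := by
  have h_split (r φ : ℝ) : zern n m b r φ * zern n' m' b' r φ =
      zernNormalization n m * zernNormalization n' m' * (Rz n m r * Rz n' m' r) *
        (zernAngular m b φ * zernAngular m' b' φ) := by
    unfold zern zernNormalization zernAngular
    ring
  simp_rw [h_split, intervalIntegral.integral_const_mul]
  rw [← intervalIntegral.integral_const_mul (_ * _ * _)]
  refine intervalIntegral.integral_congr fun r _ => ?_
  ring

theorem zernNormalization_mul_self (n m : ℕ) :
    zernNormalization n m * zernNormalization n m =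
      (if m = 0 then (1 : ℝ) else 2) * ((n : ℝ) + 1) / π :=
  Real.mul_self_sqrt (by positivity)

theorem zernike_orthonormal (n m n' m' : ℕ) (b b' : Bool)
    (hmn : m ≤ n) (heven : Even (n - m)) (hmn' : m' ≤ n') (heven' : Even (n' - m'))
    (hb : b = false → 1 ≤ m) (hb' : b' = false → 1 ≤ m') :
    (∫ r in (0:ℝ)..1, (∫ φ in (0:ℝ)..(2 * π), zern n m b r φ * zern n' m' b' r φ) * r) =
      if (n, m, b) = (n', m', b') then 1 else 0 := by
  rw [integral_zern_mul_zern, integral_zernAngular_mul_zernAngular hb]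
  by_cases h_angular : m = m' ∧ b = b'
  · obtain ⟨rfl, rfl⟩ := h_angular
    rw [integral_Rz_mul_Rz hmn heven hmn' heven']
    rcases eq_or_ne n n' with rfl | hn
    · rw [zernNormalization_mul_self, if_pos (And.intro rfl rfl), if_pos rfl, if_pos rfl]
      have h_epsilon : (if m = 0 then (1 : ℝ) else 2) ≠ 0 := by positivity
      field_simp
    · simp [hn]
  · rw [if_neg h_angular, mul_zero, zero_mul, if_neg (by simpa using fun _ => not_and.mp h_angular)]
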